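/- For all words v, w ∈ A*, v ∼ w if and only if the partial functions f_v and f_w are equal (i.e. for every α ∈ {0,1}*, f_v(α) is defined iff f_w(α) is defined, and when defined they are equal). -/

import Mathlib

/-!
The theorem is the Green–Rees solution of the word problem for free bands.  Write a nonempty word
as `w = p a s` with `p = w ∘ 0`, `a = w ∗ 0`, and symmetrically `w = s' b q` with `q = w ∘ 1`,
`b = w ∗ 1`.

If `f_v = f_w`, then since every `f_u` is defined somewhere (`exists_fword`), cancelling the first
letter gives `v ∗ β = w ∗ β` and `f_{v ∘ β} = f_{w ∘ β}`, so by induction on length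
`v ∘ β ∼ w ∘ β`.  It remains to see that `w ∼ (p a)(b q)` (`recon`): both `p a` and `b q` have the
same content as `w`, and `w x w ∼ w` whenever every letter of `x` occurs in `w` (`sim_sandwich`).

Conversely, for every set `T` of letters, `∼`-equivalent words have `∼`-equivalent longest prefixes
over `T`, followed by the same letter if any (`sim_takeWhile`); this is compatible with
concatenation, which makes the induction on `∼` immediate.  Taking `T = cont v \ {v ∗ 0}` shows
that `∼` determines `w ∗ 0` and the class of `w ∘ 0`; reversal gives the other side (`sim_step`),
and `f_v = f_w` follows by induction on the argument.
-/

/-!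
Common definitions: words over an alphabet `A` are `List A`; the free monoid
operation is `++` with identity `[]`.  `false` plays the role of `0` and
`true` the role of `1` in `{0,1}*`.
-/

namespace FreeBand

variable {A : Type*}

/-- The content of a word: the set of letters occurring in it. -/
def cont [DecidableEq A] (w : List A) : Finset A := w.toFinset

/-- The length of the longest prefix of `w` whose content has one fewer letter
than the content of `w`. -/
def prefLen [DecidableEq A] (w : List A) : ℕ :=
  Nat.findGreatest (fun k => (cont (w.take k)).card = (cont w).card - 1) w.length

/-- `w ∘ 0`: the longest prefix of `w` whose content has one fewer letter than
that of `w`; undefined (`none`) on the empty word. -/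
def circ0 [DecidableEq A] (w : List A) : Option (List A) :=
  if w = [] then none else some (w.take (prefLen w))

/-- `w ∗ 0`: the letter of `w` immediately following the prefix `w ∘ 0`. -/
def star0 [DecidableEq A] (w : List A) : Option A := w[prefLen w]?

/-- `w ∘ 1`: the longest suffix of `w` whose content has one fewer letter than
that of `w` (obtained by reversal from `circ0`); undefined on the empty word. -/
def circ1 [DecidableEq A] (w : List A) : Option (List A) :=
  (circ0 w.reverse).map List.reverse

/-- `w ∗ 1`: the letter of `w` immediately preceding the suffix `w ∘ 1`. -/
def star1 [DecidableEq A] (w : List A) : Option A := star0 w.reverse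

/-- `w ∘ b` for a single letter `b ∈ {0,1}` (`false = 0`, `true = 1`). -/
def circb [DecidableEq A] (w : List A) (b : Bool) : Option (List A) :=
  bif b then circ1 w else circ0 w

/-- `w ∗ b` for a single letter `b ∈ {0,1}` (`false = 0`, `true = 1`). -/
def starb [DecidableEq A] (w : List A) (b : Bool) : Option A :=
  bif b then star1 w else star0 w

/-- The partial map `∘ : A* × {0,1}* → A*`:  `w ∘ ε = w` and
`w ∘ (βγ) = (w ∘ β) ∘ γ`; any expression with an undefined subterm is undefined. -/
def circw [DecidableEq A] : List A → List Bool → Option (List A)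
  | w, [] => some w
  | w, b :: α => (circb w b).bind fun v => circw v α

/-- The partial map `∗ : A* × {0,1}* → A`:  `w ∗ ε = ⊥`, `w ∗ β` for a single
letter `β` is given by `starb`, and `w ∗ (βγ) = (w ∘ β) ∗ γ` for `γ ≠ ε`. -/
def starw [DecidableEq A] : List A → List Bool → Option A
  | _, [] => none
  | w, [b] => starb w b
  | w, b :: α => (circb w b).bind fun v => starw v α

/-- The least congruence `∼` on the free monoid `A*` containing `(w², w)` for
every word `w ∈ A*`. -/
inductive Sim : List A → List A → Prop
  | sq (w : List A) : Sim (w ++ w) w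
  | refl (w : List A) : Sim w w
  | symm {u v : List A} : Sim u v → Sim v u
  | trans {u v w : List A} : Sim u v → Sim v w → Sim u w
  | append {u v u' v' : List A} : Sim u v → Sim u' v' → Sim (u ++ u') (v ++ v')

/-- The partial function `f_w : {0,1}* → A*`:  `f_ε(ε) = ε`, `f_ε(α) = ⊥` for
`α ≠ ε`, `f_w(ε) = ⊥` for `w ≠ ε`, and `f_w(βγ) = (w ∗ β) · f_{w ∘ β}(γ)`. -/
def fword [DecidableEq A] : List A → List Bool → Option (List A)
  | w, [] => if w = [] then some [] else none
  | w, b :: γ =>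
      (starb w b).bind fun a =>
        (circb w b).bind fun v =>
          (fword v γ).map fun u => a :: u

/-- `K₀(v, w)`: the least `k ≥ 1` such that `w ∗ 0^k` is defined and does not
belong to `cont v`, if such `k` exists; undefined otherwise. -/
noncomputable def K0 [DecidableEq A] (v w : List A) : Option ℕ :=
  letI : DecidablePred fun k =>
      1 ≤ k ∧ ∃ a, starw w (List.replicate k false) = some a ∧ a ∉ cont v :=
    Classical.decPred _
  letI : Decidable (∃ k, 1 ≤ k ∧ ∃ a,
      starw w (List.replicate k false) = some a ∧ a ∉ cont v) := Classical.dec _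
  if h : ∃ k, 1 ≤ k ∧ ∃ a, starw w (List.replicate k false) = some a ∧ a ∉ cont v
  then some (Nat.find h) else none

/-- `K₁(v, w)`: the least `l ≥ 1` such that `v ∗ 1^l` is defined and does not
belong to `cont w`, if such `l` exists; undefined otherwise. -/
noncomputable def K1 [DecidableEq A] (v w : List A) : Option ℕ :=
  letI : DecidablePred fun l =>
      1 ≤ l ∧ ∃ a, starw v (List.replicate l true) = some a ∧ a ∉ cont w :=
    Classical.decPred _
  letI : Decidable (∃ l, 1 ≤ l ∧ ∃ a,
      starw v (List.replicate l true) = some a ∧ a ∉ cont w) := Classical.dec _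
  if h : ∃ l, 1 ≤ l ∧ ∃ a, starw v (List.replicate l true) = some a ∧ a ∉ cont w
  then some (Nat.find h) else none

/-- `m` is the short-lex least word `∼`-equivalent to `w`:  `m ∼ w` and `m` is
`≤` every word `∼`-equivalent to `w` in the short-lex order (length first, then
lexicographic order induced by the linear order on `A`). -/
def IsMinRep [LinearOrder A] (w m : List A) : Prop :=
  Sim m w ∧ ∀ u : List A, Sim u w →
    m = u ∨ m.length < u.length ∨ (m.length = u.length ∧ List.Lex (· < ·) m u)

/-! ### Consequences of idempotency -/

theorem Sim.mem_iff {v w : List A} (h : Sim v w) (x : A) : x ∈ v ↔ x ∈ w := by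
  induction h with
  | sq w => simp
  | refl w => rfl
  | symm _ ih => exact ih.symm
  | trans _ _ ih1 ih2 => exact ih1.trans ih2
  | append _ _ ih1 ih2 => simp [ih1, ih2]

theorem Sim.reverse {v w : List A} (h : Sim v w) : Sim v.reverse w.reverse := by
  induction h with
  | sq w => simpa using Sim.sq w.reverse
  | refl w => exact .refl _
  | symm _ ih => exact ih.symm
  | trans _ _ ih1 ih2 => exact ih1.trans ih2
  | append _ _ ih1 ih2 => simpa using Sim.append ih2 ih1

theorem Sim.left (u : List A) {v w : List A} (h : Sim v w) : Sim (u ++ v) (u ++ w) :=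
  .append (.refl u) h

theorem Sim.right {v w : List A} (h : Sim v w) (u : List A) : Sim (v ++ u) (w ++ u) :=
  .append h (.refl u)

/-- Multiplying on the right by letters already present does not leave the `R`-class. -/
theorem exists_right (x : List A) : ∀ w : List A, (∀ a ∈ x, a ∈ w) →
    ∃ t, Sim (w ++ x ++ t) w := by
  induction x with
  | nil => exact fun w _ => ⟨[], by simpa using Sim.refl w⟩
  | cons a x ih =>
    intro w h
    obtain ⟨u, s, rfl⟩ := List.append_of_mem (h a (by simp))
    obtain ⟨t, ht⟩ := ih (u ++ a :: s ++ [a]) (fun b hb => by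
      have := h b (by simp [hb])
      simp at this ⊢
      tauto)
    refine ⟨t ++ s, ?_⟩
    have h1 := ht.right s
    have h2 := (Sim.sq (a :: s)).left u
    simp only [List.append_assoc, List.cons_append, List.nil_append] at h1 h2 ⊢
    exact h1.trans h2

/-- Multiplying on the left by letters already present does not leave the `L`-class. -/
theorem exists_left (x w : List A) (h : ∀ a ∈ x, a ∈ w) : ∃ t, Sim (t ++ x ++ w) w := by
  obtain ⟨t, ht⟩ := exists_right x.reverse w.reverse (by simpa using h)
  exact ⟨t.reverse, by simpa using ht.reverse⟩

/-- In a free band `w x w = w` as soon as every letter of `x` occurs in `w`. -/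
theorem sim_sandwich (x w : List A) (h : ∀ a ∈ x, a ∈ w) : Sim (w ++ x ++ w) w := by
  obtain ⟨t, ht⟩ := exists_right x w h
  obtain ⟨u, hu⟩ := exists_left x w h
  -- With `q = x w` and `p = w x`: `w ∼ (u q)(p t) ∼ u (q p)(q p) t ∼ w (p q) w`.
  have h1 : Sim w (u ++ x ++ w ++ (w ++ x ++ t)) := (Sim.sq w).symm.trans (.append hu.symm ht.symm)
  have h2 := ((Sim.sq (x ++ w ++ (w ++ x))).symm.left u).right t
  have h3 : Sim ((u ++ x ++ w) ++ (w ++ x ++ (x ++ w)) ++ (w ++ x ++ t))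
      (w ++ (w ++ x ++ (x ++ w)) ++ w) := .append (.append hu (.refl _)) ht
  have h4 : Sim (w ++ (w ++ x ++ (x ++ w)) ++ w) (w ++ x ++ w) := by
    have a1 := (Sim.sq w).append ((Sim.sq x).append (Sim.sq w))
    simpa using a1
  simp only [List.append_assoc] at h1 h2 h3 h4 ⊢
  exact (h1.trans (h2.trans (h3.trans h4))).symm

/-- A word is equivalent to the product of a prefix and a suffix of full content. -/
theorem sim_prefix_suffix {v g s s' h : List A} (hg : v = g ++ s) (hh : v = s' ++ h)
    (cg : ∀ x ∈ v, x ∈ g) (ch : ∀ x ∈ v, x ∈ h) : Sim v (g ++ h) := by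
  have h1 : Sim (v ++ g) g := by
    have := sim_sandwich s g (fun x hx => cg x (by simp [hg, hx]))
    rwa [← hg] at this
  have h2 : Sim (h ++ v) h := by
    have := sim_sandwich s' h (fun x hx => ch x (by simp [hh, hx]))
    rwa [List.append_assoc, ← hh] at this
  have h3 : Sim (v ++ (g ++ h) ++ v) v := sim_sandwich (g ++ h) v (fun x hx => by
    rcases List.mem_append.1 hx with hx | hx
    · simp [hg, hx]
    · simp [hh, hx])
  have h4 := Sim.append h1 h2
  simp only [List.append_assoc] at h3 h4 ⊢
  exact h3.symm.trans h4

/-! ### The factorization at the last new letter -/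

/-- `w = p a s` where `a` is the last letter of `w` to make its first appearance, and `p` is what
precedes that appearance. -/
def LastNew (w p : List A) (a : A) (s : List A) : Prop :=
  w = p ++ a :: s ∧ a ∉ p ∧ ∀ x ∈ s, x ∈ p ∨ x = a

theorem exists_lastNew (w : List A) (hw : w ≠ []) : ∃ p a s, LastNew w p a s := by
  induction w using List.reverseRecOn with
  | nil => exact absurd rfl hw
  | append_singleton w b ih =>
    by_cases hb : b ∈ w
    · obtain ⟨p, a, s, h1, h2, h3⟩ := ih (List.ne_nil_of_mem hb)
      refine ⟨p, a, s ++ [b], by simp [h1], h2, ?_⟩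
      intro x hx
      rcases List.mem_append.1 hx with hx | hx
      · exact h3 x hx
      · rw [h1] at hb
        simp only [List.mem_singleton] at hx
        subst hx
        rcases List.mem_append.1 hb with hb | hb
        · exact .inl hb
        · rcases List.mem_cons.1 hb with hb | hb
          · exact .inr hb
          · exact h3 _ hb
    · exact ⟨w, b, [], rfl, hb, by simp⟩

section

variable [DecidableEq A]

theorem LastNew.prefLen_eq {w p : List A} {a : A} {s : List A} (h : LastNew w p a s) :
    prefLen w = p.length := by
  obtain ⟨rfl, ha, hs⟩ := h
  have hc : cont (p ++ a :: s) = insert a (cont p) := by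
    ext x
    have := hs x
    simp only [cont, List.mem_toFinset, List.mem_append, List.mem_cons, Finset.mem_insert]
    tauto
  have ha' : a ∉ cont p := by simpa [cont] using ha
  unfold prefLen
  rw [Nat.findGreatest_eq_iff]
  refine ⟨by simp, fun _ => by rw [hc]; simp [ha'], ?_⟩
  intro n hn _
  -- A longer prefix contains `p a`, hence has full content.
  have : insert a (cont p) ⊆ cont ((p ++ a :: s).take n) := by
    obtain ⟨k, rfl⟩ := Nat.exists_eq_add_of_lt hn
    intro x hx
    simp only [cont, List.mem_toFinset, Finset.mem_insert, add_assoc, List.take_length_add_append,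
      List.take_succ_cons, List.mem_append, List.mem_cons] at hx ⊢
    tauto
  have := Finset.card_le_card this
  rw [hc]
  rw [Finset.card_insert_of_notMem ha'] at this ⊢
  omega

theorem LastNew.circ0_eq {w p : List A} {a : A} {s : List A} (h : LastNew w p a s) :
    circ0 w = some p := by
  have := h.prefLen_eq
  obtain ⟨rfl, -, -⟩ := h
  simp [circ0, this]

theorem LastNew.star0_eq {w p : List A} {a : A} {s : List A} (h : LastNew w p a s) :
    star0 w = some a := by
  have := h.prefLen_eq
  obtain ⟨rfl, -, -⟩ := h
  simp [star0, this]

theorem exists_step (w : List A) (hw : w ≠ []) (b : Bool) :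
    ∃ a p, starb w b = some a ∧ circb w b = some p ∧ p.length < w.length := by
  cases b with
  | false =>
    obtain ⟨p, a, s, h⟩ := exists_lastNew w hw
    exact ⟨a, p, h.star0_eq, h.circ0_eq, by simp [h.1]⟩
  | true =>
    obtain ⟨p, a, s, h⟩ := exists_lastNew w.reverse (by simpa using hw)
    refine ⟨a, p.reverse, h.star0_eq, by simp [circb, circ1, h.circ0_eq], ?_⟩
    have := congrArg List.length h.1
    simp at this ⊢
    omega

/-- `w ∼ (w ∘ 0)(w ∗ 0)(w ∗ 1)(w ∘ 1)`. -/
theorem recon {w : List A} (hw : w ≠ []) {a b : A} {p q : List A}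
    (ha : starb w false = some a) (hp : circb w false = some p)
    (hb : starb w true = some b) (hq : circb w true = some q) :
    Sim w ((p ++ [a]) ++ (b :: q)) := by
  obtain ⟨p', a', s, h⟩ := exists_lastNew w hw
  obtain ⟨r, b', t, h'⟩ := exists_lastNew w.reverse (by simpa using hw)
  obtain rfl : a' = a := Option.some.inj (h.star0_eq.symm.trans ha)
  obtain rfl : p' = p := Option.some.inj (h.circ0_eq.symm.trans hp)
  obtain rfl : b' = b := Option.some.inj (h'.star0_eq.symm.trans hb)
  obtain rfl : r.reverse = q := by simpa [circb, circ1, h'.circ0_eq] using hq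
  have hw' : w = t.reverse ++ b' :: r.reverse := by
    have := congrArg List.reverse h'.1
    simpa using this
  refine sim_prefix_suffix (s := s) (s' := t.reverse) (by simp [h.1]) hw' ?_ ?_
  · intro x hx
    have := h.2.2 x
    rw [h.1] at hx
    simp at hx ⊢
    tauto
  · intro x hx
    have := h'.2.2 x
    rw [hw'] at hx
    simp at hx ⊢
    tauto

/-! ### Invariance under the congruence -/

/-- The longest prefix over a set `T` of letters is determined up to `∼` by the `∼`-class, and the
letter following it (if any) is determined exactly. -/
theorem sim_takeWhile (T : A → Bool) {v w : List A} (h : Sim v w) :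
    Sim (v.takeWhile T) (w.takeWhile T) ∧
      (v.dropWhile T).head? = (w.dropWhile T).head? := by
  induction h with
  | sq w =>
    by_cases hT : ∀ x ∈ w, T x
    · rw [List.takeWhile_append_of_pos hT, List.dropWhile_append_of_pos hT,
        List.takeWhile_eq_self_iff.2 hT]
      exact ⟨.sq w, rfl⟩
    · have hd : w.dropWhile T ≠ [] := by rwa [Ne, List.dropWhile_eq_nil_iff]
      have hl : (w.takeWhile T).length ≠ w.length := fun e =>
        hT (List.takeWhile_eq_self_iff.1 ((List.takeWhile_prefix T).eq_of_length e))
      rw [List.takeWhile_append, List.dropWhile_append, if_neg hl, if_neg (by simpa using hd)]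
      exact ⟨.refl _, by rw [List.head?_append_of_ne_nil _ hd]⟩
  | refl w => exact ⟨.refl _, rfl⟩
  | symm _ ih => exact ⟨ih.1.symm, ih.2.symm⟩
  | trans _ _ ih1 ih2 => exact ⟨ih1.1.trans ih2.1, ih1.2.trans ih2.2⟩
  | @append u v u' v' h h' ih1 ih2 =>
    by_cases hT : ∀ x ∈ u, T x
    · have hT' : ∀ x ∈ v, T x := fun x hx => hT x ((h.mem_iff x).2 hx)
      rw [List.takeWhile_append_of_pos hT, List.dropWhile_append_of_pos hT,
        List.takeWhile_append_of_pos hT', List.dropWhile_append_of_pos hT']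
      exact ⟨.append h ih2.1, ih2.2⟩
    · have hT' : ¬ ∀ x ∈ v, T x := fun H => hT fun x hx => H x ((h.mem_iff x).1 hx)
      have key : ∀ w z : List A, (¬ ∀ x ∈ w, T x) → (w ++ z).takeWhile T = w.takeWhile T ∧
          ((w ++ z).dropWhile T).head? = (w.dropWhile T).head? := by
        intro w z hT
        have hd : w.dropWhile T ≠ [] := by rwa [Ne, List.dropWhile_eq_nil_iff]
        have hl : (w.takeWhile T).length ≠ w.length := fun e =>
          hT (List.takeWhile_eq_self_iff.1 ((List.takeWhile_prefix T).eq_of_length e))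
        rw [List.takeWhile_append, List.dropWhile_append, if_neg hl, if_neg (by simpa using hd)]
        exact ⟨rfl, by rw [List.head?_append_of_ne_nil _ hd]⟩
      rw [(key u u' hT).1, (key u u' hT).2, (key v v' hT').1, (key v v' hT').2]
      exact ih1

theorem sim_lastNew {v w p s : List A} {a : A} (h : Sim v w) (hv : LastNew v p a s) :
    ∃ q t, LastNew w q a t ∧ Sim p q := by
  obtain ⟨e, ha, hs⟩ := hv
  -- The letters of `p` are those of `v` other than `a`.
  let T : A → Bool := fun x => decide (x ∈ p)
  have hp : ∀ x ∈ p, T x := fun x hx => by simpa [T] using hx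
  have haT : T a = false := by simpa [T] using ha
  obtain ⟨h1, h2⟩ := sim_takeWhile T h
  rw [e, List.takeWhile_append_of_pos hp, List.takeWhile_cons_of_neg (by simp [haT]),
    List.append_nil] at h1
  rw [e, List.dropWhile_append_of_pos hp, List.dropWhile_cons_of_neg (by simp [haT])] at h2
  obtain ⟨t, ht⟩ : ∃ t, w.dropWhile T = a :: t := by
    cases hd : w.dropWhile T with
    | nil => simp [hd] at h2
    | cons b t => exact ⟨t, by simp [hd] at h2; rw [h2]⟩
  have hw : w = w.takeWhile T ++ a :: t := by rw [← ht, List.takeWhile_append_dropWhile]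
  refine ⟨w.takeWhile T, t, ⟨hw, fun hm => ha ((h1.mem_iff a).2 hm), ?_⟩, h1⟩
  intro x hx
  have hxv : x ∈ v := (h.mem_iff x).2 (by rw [hw]; simp [hx])
  rw [← h1.mem_iff]
  have := hs x
  rw [e] at hxv
  simp at hxv
  tauto

/-- `w ∗ β` and the `∼`-class of `w ∘ β` depend only on the `∼`-class of `w`. -/
theorem sim_step {v w : List A} (h : Sim v w) (hv : v ≠ []) (b : Bool) :
    ∃ a p q, starb v b = some a ∧ starb w b = some a ∧
      circb v b = some p ∧ circb w b = some q ∧ Sim p q := by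
  cases b with
  | false =>
    obtain ⟨p, a, s, hv⟩ := exists_lastNew v hv
    obtain ⟨q, t, hw, hpq⟩ := sim_lastNew h hv
    exact ⟨a, p, q, hv.star0_eq, hw.star0_eq, hv.circ0_eq, hw.circ0_eq, hpq⟩
  | true =>
    obtain ⟨p, a, s, hv⟩ := exists_lastNew v.reverse (by simpa using hv)
    obtain ⟨q, t, hw, hpq⟩ := sim_lastNew h.reverse hv
    exact ⟨a, p.reverse, q.reverse, hv.star0_eq, hw.star0_eq,
      by simp [circb, circ1, hv.circ0_eq], by simp [circb, circ1, hw.circ0_eq], hpq.reverse⟩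

/-! ### The two implications -/

theorem Sim.eq_nil_iff {v w : List A} (h : Sim v w) : v = [] ↔ w = [] := by
  simp only [List.eq_nil_iff_forall_not_mem, h.mem_iff]

theorem fword_eq_of_sim (α : List Bool) : ∀ v w : List A, Sim v w → fword v α = fword w α := by
  induction α with
  | nil => intro v w h; simp [fword, h.eq_nil_iff]
  | cons b γ ih =>
    intro v w h
    by_cases hv : v = []
    · rw [hv, h.eq_nil_iff.1 hv]
    · obtain ⟨a, p, q, h1, h2, h3, h4, h5⟩ := sim_step h hv b
      simp [fword, h1, h2, h3, h4, ih p q h5]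

/-- `f_w` is defined at some argument. -/
theorem exists_fword (w : List A) : ∃ γ u, fword w γ = some u := by
  induction hn : w.length using Nat.strong_induction_on generalizing w with
  | _ n ih =>
    by_cases hw : w = []
    · exact ⟨[], [], by simp [fword, hw]⟩
    · obtain ⟨a, p, h1, h2, h3⟩ := exists_step w hw false
      obtain ⟨γ, u, h⟩ := ih p.length (hn ▸ h3) p rfl
      exact ⟨false :: γ, a :: u, by simp [fword, h1, h2, h]⟩

theorem fword_step {v w p q : List A} {a c : A} {b : Bool}
    (h : ∀ α, fword v α = fword w α) (h1 : starb v b = some a) (h2 : circb v b = some p)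
    (h3 : starb w b = some c) (h4 : circb w b = some q) :
    a = c ∧ ∀ α, fword p α = fword q α := by
  have key : ∀ γ, (fword p γ).map (fun u => a :: u) = (fword q γ).map (fun u => c :: u) := by
    intro γ
    simpa [fword, h1, h2, h3, h4] using h (b :: γ)
  have hac : a = c := by
    obtain ⟨γ, u, hu⟩ := exists_fword p
    have := key γ
    rw [hu] at this
    cases hq : fword q γ with
    | none => simp [hq] at this
    | some z => simp [hq] at this; exact this.1
  subst hac
  exact ⟨rfl, fun α => Option.map_injective (List.cons_injective) (key α)⟩

theorem sim_of_fword_eq (v w : List A) (h : ∀ α, fword v α = fword w α) : Sim v w := by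
  induction hn : v.length using Nat.strong_induction_on generalizing v w with
  | _ n ih =>
    have hnil : v = [] ↔ w = [] := by
      have := h []
      by_cases h1 : v = [] <;> by_cases h2 : w = [] <;> simp_all [fword]
    by_cases hv : v = []
    · rw [hv, hnil.1 hv]
      exact .refl _
    · have hw : w ≠ [] := fun e => hv (hnil.2 e)
      obtain ⟨a, p, v1, v2, v3⟩ := exists_step v hv false
      obtain ⟨b, q, v4, v5, v6⟩ := exists_step v hv true
      obtain ⟨a', p', w1, w2, -⟩ := exists_step w hw false
      obtain ⟨b', q', w4, w5, -⟩ := exists_step w hw true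
      obtain ⟨rfl, hp⟩ := fword_step h v1 v2 w1 w2
      obtain ⟨rfl, hq⟩ := fword_step h v4 v5 w4 w5
      have sp : Sim p p' := ih p.length (hn ▸ v3) p p' hp rfl
      have sq : Sim q q' := ih q.length (hn ▸ v6) q q' hq rfl
      exact (recon hv v1 v2 v4 v5).trans
        ((Sim.append (sp.right [a]) (sq.left [b])).trans (recon hw w1 w2 w4 w5).symm)

end

/-- For all words `v, w ∈ A*`, `v ∼ w` iff the partial functions `f_v` and
`f_w` are equal (defined on the same inputs, with equal values). -/
theorem sim_iff_fword_eq [Nonempty A] [DecidableEq A] (v w : List A) :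
    Sim v w ↔ ∀ α : List Bool, fword v α = fword w α :=
  ⟨fun h α => fword_eq_of_sim α v w h, sim_of_fword_eq v w⟩

end FreeBand
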